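/- Central limit theorem via the magic gap: let ρ be a zero-mean n-qudit state, i.e. Ξ_ρ(p⃗,q⃗) = 1 at every point where |Ξ_ρ(p⃗,q⃗)| = 1. Then for every integer N ≥ 0, ‖⊠^N ρ − M(ρ)‖₂ ≤ (1 − MG(ρ))^N ‖ρ − M(ρ)‖₂, where ‖A‖₂ = (Tr[A†A])^{1/2} is the Hilbert–Schmidt norm. In particular, if ρ ≠ M(ρ) then MG(ρ) > 0, so ⊠^N ρ converges to M(ρ) exponentially fast in N. -/

import Mathlib

open scoped BigOperators ComplexOrder Classical ENNReal
open Matrix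

namespace PaperQI

/-- The computational-basis index set `ℤ_d^n` for an `n`-qudit system. -/
abbrev QV (d n : ℕ) := Fin n → ZMod d

/-- Matrices (linear operators) on the `n`-qudit Hilbert space `(ℂ^d)^{⊗ n}`,
written in the computational basis indexed by `ℤ_d^n`. -/
abbrev Mat (d n : ℕ) := Matrix (QV d n) (QV d n) ℂ

/-- The character `ξ^z = exp(2πi z/d)` for `z ∈ ℤ_d`. -/
noncomputable def ch (d : ℕ) (z : ZMod d) : ℂ :=
  Complex.exp (2 * Real.pi * Complex.I * (z.val : ℂ) / (d : ℂ))

/-- Dot product on `ℤ_d^n`. -/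
def qdot {d n : ℕ} (p k : QV d n) : ZMod d := ∑ i, p i * k i

/-- The `n`-qudit Weyl operator `w(p,q) = ⊗_i ξ^{-2⁻¹ p_i q_i} Z^{p_i} X^{q_i}`
(for odd prime `d`).  Its matrix entries are
`w(p,q)[k+q, k] = ξ^{p·k + 2⁻¹ p·q}`. -/
noncomputable def weyl (d n : ℕ) [Fact (Nat.Prime d)] (p q : QV d n) : Mat d n :=
  Matrix.of fun k' k =>
    if k' = k + q then ch d (qdot p k + (2 : ZMod d)⁻¹ * qdot p q) else 0

/-- `ρ` is an `n`-qudit state: positive semidefinite with trace one. -/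
def IsState (d n : ℕ) [Fact (Nat.Prime d)] (ρ : Mat d n) : Prop :=
  ρ.PosSemidef ∧ ρ.trace = 1

/-- The characteristic function `Ξ_ρ(p,q) = Tr[ρ w(-p,-q)]`. -/
noncomputable def xi (d n : ℕ) [Fact (Nat.Prime d)] (ρ : Mat d n)
    (pq : QV d n × QV d n) : ℂ :=
  (ρ * weyl d n (-pq.1) (-pq.2)).trace

/-- The mean state `M(ρ) = d^{-n} ∑_{|Ξ_ρ(p,q)| = 1} Ξ_ρ(p,q) w(p,q)`. -/
noncomputable def meanState (d n : ℕ) [Fact (Nat.Prime d)] (ρ : Mat d n) : Mat d n :=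
  ((d : ℂ) ^ n)⁻¹ •
    ∑ pq : QV d n × QV d n,
      if ‖xi d n ρ pq‖ = 1 then xi d n ρ pq • weyl d n pq.1 pq.2 else 0

/-- `ρ` is a minimal stabilizer-projection state (MSPS): for some `r ≤ n` there are
mutually commuting Weyl operators `w(p_i,q_i)`, `i = 1,…,r`, whose labels generate a
subgroup of `V^n` of order `d^r`, and phases `x ∈ ℤ_d^r`, such that
`ρ = d^{-(n-r)} ∏_i ( (1/d) ∑_{k ∈ ℤ_d} (ξ^{x_i} w(p_i,q_i))^k )`. -/
noncomputable def IsMSPS (d n : ℕ) [Fact (Nat.Prime d)] (ρ : Mat d n) : Prop :=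
  ∃ r : ℕ, r ≤ n ∧
    ∃ (p q : Fin r → QV d n) (x : Fin r → ZMod d),
      (∀ i j, Commute (weyl d n (p i) (q i)) (weyl d n (p j) (q j))) ∧
      Nat.card (AddSubgroup.closure (Set.range fun i => (p i, q i)) :
        AddSubgroup (QV d n × QV d n)) = d ^ r ∧
      ρ = ((d : ℂ) ^ (n - r))⁻¹ •
        (List.ofFn fun i =>
          (d : ℂ)⁻¹ • ∑ k : ZMod d, (ch d (x i) • weyl d n (p i) (q i)) ^ k.val).prod

/-- The magic gap `MG(ρ) = 1 - max{|Ξ_ρ(p,q)| : Ξ_ρ(p,q) ≠ 0, |Ξ_ρ(p,q)| ≠ 1}`,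
and `MG(ρ) = 0` if this set is empty. -/
noncomputable def magicGap (d n : ℕ) [Fact (Nat.Prime d)] (ρ : Mat d n) : ℝ :=
  let s : Finset ℝ :=
    (Finset.univ.filter fun pq : QV d n × QV d n =>
      xi d n ρ pq ≠ 0 ∧ ‖xi d n ρ pq‖ ≠ 1).image
      fun pq => ‖xi d n ρ pq‖
  if h : s.Nonempty then 1 - s.max' h else 0

/-- Von Neumann entropy `H(ρ) = -∑ λ_i log λ_i` (natural log, eigenvalues of `ρ`),
with the convention `0 log 0 = 0`; junk value `0` on non-Hermitian matrices. -/
noncomputable def vnEnt {d n : ℕ} [Fact (Nat.Prime d)] (ρ : Mat d n) : ℝ :=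
  if h : ρ.IsHermitian then -∑ i, h.eigenvalues i * Real.log (h.eigenvalues i) else 0

/-- Rényi entropy `H_α` for `α ∈ [0,∞]`:  `H_0 = log rank`, `H_1 = H` (von Neumann),
`H_∞ = -log λ_max`, and `H_α = (1-α)⁻¹ log ∑ λ_i^α` otherwise. -/
noncomputable def renyiEnt {d n : ℕ} [Fact (Nat.Prime d)] (α : ℝ≥0∞) (ρ : Mat d n) : ℝ :=
  if h : ρ.IsHermitian then
    if α = 0 then Real.log (ρ.rank : ℝ)
    else if α = 1 then -∑ i, h.eigenvalues i * Real.log (h.eigenvalues i)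
    else if α = ⊤ then -Real.log (⨆ i, h.eigenvalues i)
    else (1 - α.toReal)⁻¹ * Real.log (∑ i, h.eigenvalues i ^ α.toReal)
  else 0

/-- Matrix logarithm on the support: `log ρ = U diag(log λ_i) U†` via the spectral
decomposition, with `log 0 = 0` on the kernel; junk value `0` off Hermitian matrices. -/
noncomputable def matLog {d n : ℕ} [Fact (Nat.Prime d)] (ρ : Mat d n) : Mat d n :=
  if h : ρ.IsHermitian then
    (h.eigenvectorUnitary : Mat d n) *
      Matrix.diagonal (fun i => (Real.log (h.eigenvalues i) : ℂ)) *
      star (h.eigenvectorUnitary : Mat d n)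
  else 0

/-- Matrix real power on the support: `ρ^t = U diag(λ_i^t) U†`, with `0^t = 0` on the
kernel (for `t ≠ 0`); junk value `0` off Hermitian matrices. -/
noncomputable def matRpow {d n : ℕ} [Fact (Nat.Prime d)] (ρ : Mat d n) (t : ℝ) : Mat d n :=
  if h : ρ.IsHermitian then
    (h.eigenvectorUnitary : Mat d n) *
      Matrix.diagonal (fun i => ((h.eigenvalues i ^ t : ℝ) : ℂ)) *
      star (h.eigenvectorUnitary : Mat d n)
  else 0

/-- Support inclusion `supp ρ ⊆ supp σ`, expressed as `ker σ ⊆ ker ρ`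
(the correct notion for positive semidefinite matrices). -/
def suppLE {d n : ℕ} [Fact (Nat.Prime d)] (ρ σ : Mat d n) : Prop :=
  ∀ v : QV d n → ℂ, σ.mulVec v = 0 → ρ.mulVec v = 0

/-- Relative entropy `D(ρ‖σ) = Tr[ρ(log ρ - log σ)]` when `supp ρ ⊆ supp σ`, else `+∞`. -/
noncomputable def relEnt {d n : ℕ} [Fact (Nat.Prime d)] (ρ σ : Mat d n) : EReal :=
  if suppLE ρ σ then (((ρ * (matLog ρ - matLog σ)).trace.re : ℝ) : EReal) else ⊤

/-- Sandwiched Rényi relative entropy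
`D_α(ρ‖σ) = (α-1)⁻¹ log Tr[(σ^{(1-α)/(2α)} ρ σ^{(1-α)/(2α)})^α]` for `α ≠ 1`
(with `+∞` when `supp ρ ⊄ supp σ`), and `D_1 = D` the relative entropy. -/
noncomputable def sandRenyi {d n : ℕ} [Fact (Nat.Prime d)] (α : ℝ) (ρ σ : Mat d n) :
    EReal :=
  if α = 1 then relEnt ρ σ
  else if suppLE ρ σ then
    let x : ℝ := (α - 1)⁻¹ * Real.log
      ((matRpow (matRpow σ ((1 - α) / (2 * α)) * ρ * matRpow σ ((1 - α) / (2 * α)))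
        α).trace.re)
    (x : EReal)
  else ⊤

/-- The key unitary `U|i,j⟩ = |N g₁₁ i - N g₁₀ j, -N g₀₁ i + N g₀₀ j⟩`,
where `N = (det G)⁻¹` in `ℤ_d`. -/
noncomputable def convU (d n : ℕ) [Fact (Nat.Prime d)] (g00 g01 g10 g11 : ZMod d) :
    Matrix (QV d n × QV d n) (QV d n × QV d n) ℂ :=
  Matrix.of fun kl ij =>
    if kl = ((fun a => (g00 * g11 - g01 * g10)⁻¹ * g11 * ij.1 a
                      - (g00 * g11 - g01 * g10)⁻¹ * g10 * ij.2 a : QV d n),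
             (fun a => -((g00 * g11 - g01 * g10)⁻¹ * g01) * ij.1 a
                      + (g00 * g11 - g01 * g10)⁻¹ * g00 * ij.2 a : QV d n))
    then 1 else 0

/-- Tensor (Kronecker) product of two `n`-qudit operators, on the doubled system. -/
def kron {d n : ℕ} (ρ σ : Mat d n) : Matrix (QV d n × QV d n) (QV d n × QV d n) ℂ :=
  Matrix.of fun ij kl => ρ ij.1 kl.1 * σ ij.2 kl.2

/-- Partial trace over the second `n`-qudit factor. -/
noncomputable def ptrB {d n : ℕ} [Fact (Nat.Prime d)]
    (M : Matrix (QV d n × QV d n) (QV d n × QV d n) ℂ) : Mat d n :=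
  Matrix.of fun i i' => ∑ j : QV d n, M (i, j) (i', j)

/-- The convolution `ρ ⊠ σ = Tr_B[U (ρ ⊗ σ) U†]` with parameter matrix
`G = [g₀₀, g₀₁; g₁₀, g₁₁]`. -/
noncomputable def conv (d n : ℕ) [Fact (Nat.Prime d)] (g00 g01 g10 g11 : ZMod d)
    (ρ σ : Mat d n) : Mat d n :=
  ptrB (convU d n g00 g01 g10 g11 * kron ρ σ * (convU d n g00 g01 g10 g11)ᴴ)

/-- The beam-splitter unitary `U_{s,t}|i,j⟩ = |s i + t j, t i - s j⟩`. -/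
noncomputable def bsU (d n : ℕ) [Fact (Nat.Prime d)] (s t : ZMod d) :
    Matrix (QV d n × QV d n) (QV d n × QV d n) ℂ :=
  Matrix.of fun kl ij =>
    if kl = ((fun a => s * ij.1 a + t * ij.2 a : QV d n),
             (fun a => t * ij.1 a - s * ij.2 a : QV d n))
    then 1 else 0

/-- The beam-splitter convolution `ρ ⊠_{s,t} σ = Tr_B[U_{s,t} (ρ ⊗ σ) U_{s,t}†]`. -/
noncomputable def bsConv (d n : ℕ) [Fact (Nat.Prime d)] (s t : ZMod d)
    (ρ σ : Mat d n) : Mat d n :=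
  ptrB (bsU d n s t * kron ρ σ * (bsU d n s t)ᴴ)

/-- Iterated self-convolution: `⊠^0 ρ = ρ` and `⊠^{N+1} ρ = (⊠^N ρ) ⊠ ρ`. -/
noncomputable def bsIter (d n : ℕ) [Fact (Nat.Prime d)] (s t : ZMod d) :
    ℕ → Mat d n → Mat d n
  | 0, ρ => ρ
  | N + 1, ρ => bsConv d n s t (bsIter d n s t N ρ) ρ

/-- `ρ` is the pure stabilizer state `|ψ⟩⟨ψ|` with stabilizer label group `S ⊆ V^n`:
`S` has order `d^n` and `ψ` is a common eigenvector of all `w(p,q)`, `(p,q) ∈ S`. -/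
noncomputable def IsPureStabilizerWithGroup (d n : ℕ) [Fact (Nat.Prime d)]
    (ρ : Mat d n) (S : AddSubgroup (QV d n × QV d n)) : Prop :=
  Nat.card S = d ^ n ∧
    ∃ ψ : QV d n → ℂ, ψ ≠ 0 ∧
      ρ = Matrix.of (fun a b => ψ a * starRingEnd ℂ (ψ b)) ∧
      ∀ pq ∈ S, ∃ c : ℂ, (weyl d n pq.1 pq.2).mulVec ψ = c • ψ

/-- `ρ` is a pure stabilizer state. -/
noncomputable def IsPureStabilizer (d n : ℕ) [Fact (Nat.Prime d)] (ρ : Mat d n) : Prop :=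
  ∃ S : AddSubgroup (QV d n × QV d n), IsPureStabilizerWithGroup d n ρ S

/-- `ρ` is a stabilizer state: a convex combination of pure stabilizer states. -/
noncomputable def IsStabilizerState (d n : ℕ) [Fact (Nat.Prime d)] (ρ : Mat d n) : Prop :=
  ∃ (m : ℕ) (p : Fin m → ℝ) (τ : Fin m → Mat d n),
    (∀ i, 0 ≤ p i) ∧ ∑ i, p i = 1 ∧ (∀ i, IsPureStabilizer d n (τ i)) ∧
    ρ = ∑ i, (p i : ℂ) • τ i

/-- `U` is a Clifford unitary: a unitary mapping each Weyl operator, under conjugation,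
to a complex phase times a Weyl operator. -/
noncomputable def IsClifford (d n : ℕ) [Fact (Nat.Prime d)] (U : Mat d n) : Prop :=
  U ∈ Matrix.unitaryGroup (QV d n) ℂ ∧
    ∀ pq : QV d n × QV d n, ∃ (c : ℂ) (pq' : QV d n × QV d n),
      ‖c‖ = 1 ∧ U * weyl d n pq.1 pq.2 * Uᴴ = c • weyl d n pq'.1 pq'.2

/-- The divergence-based quantum Fisher information `J(ρ; H) = Tr[ρ [H,[H, log ρ]]]`. -/
noncomputable def fisherJ {d n : ℕ} [Fact (Nat.Prime d)] (ρ H : Mat d n) : ℝ :=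
  (ρ * (H * (H * matLog ρ - matLog ρ * H) - (H * matLog ρ - matLog ρ * H) * H)).trace.re

/-- Embed a single-qudit operator at site `k` of an `n`-qudit system
(tensored with the identity elsewhere). -/
noncomputable def embedAt (d n : ℕ) (k : Fin n) (M : Matrix (ZMod d) (ZMod d) ℂ) :
    Mat d n :=
  Matrix.of fun v w => if ∀ i, i ≠ k → v i = w i then M (v k) (w k) else 0

/-- The rank-one projection `H_j^Z = |j⟩⟨j|` onto the eigenvector of `Z`
with eigenvalue `ξ^j`. -/
noncomputable def projZ (d : ℕ) (j : ZMod d) : Matrix (ZMod d) (ZMod d) ℂ :=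
  Matrix.of fun a b => if a = j ∧ b = j then 1 else 0

/-- The rank-one projection `H_j^X` onto the eigenvector of `X` with eigenvalue `ξ^j`;
its entries are `(H_j^X)_{a b} = d⁻¹ ξ^{j(b-a)}`. -/
noncomputable def projX (d : ℕ) (j : ZMod d) : Matrix (ZMod d) (ZMod d) ℂ :=
  Matrix.of fun a b => (d : ℂ)⁻¹ * ch d (j * (b - a))

/-- Total Fisher information
`J(ρ) = ∑_{k=1}^n ∑_{j ∈ ℤ_d} J(ρ; H_j^{X_k}) + J(ρ; H_j^{Z_k})`. -/
noncomputable def fisherTotal (d n : ℕ) [Fact (Nat.Prime d)] (ρ : Mat d n) : ℝ :=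
  ∑ k : Fin n, ∑ j : ZMod d,
    (fisherJ ρ (embedAt d n k (projX d j)) + fisherJ ρ (embedAt d n k (projZ d j)))

/-- Holevo capacity of a channel `E`:
`χ(E) = sup H(∑ p_i E(ρ_i)) - ∑ p_i H(E(ρ_i))` over finite ensembles of states. -/
noncomputable def holevoCap (d n : ℕ) [Fact (Nat.Prime d)] (E : Mat d n → Mat d n) : ℝ :=
  ⨆ m : ℕ, ⨆ p : Fin m → ℝ, ⨆ ρs : Fin m → Mat d n,
    ⨆ _ : (∀ i, 0 ≤ p i) ∧ ∑ i, p i = 1 ∧ ∀ i, IsState d n (ρs i),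
      (vnEnt (∑ i, (p i : ℂ) • E (ρs i)) - ∑ i, p i * vnEnt (E (ρs i)))

/-- Hilbert–Schmidt norm `‖A‖₂ = (Tr[A†A])^{1/2}`. -/
noncomputable def hsNorm {d n : ℕ} [Fact (Nat.Prime d)] (A : Mat d n) : ℝ :=
  Real.sqrt ((Aᴴ * A).trace.re)

/-- Trace norm `‖A‖₁ = Tr[(A†A)^{1/2}]`. -/
noncomputable def trNorm {d n : ℕ} [Fact (Nat.Prime d)] (A : Mat d n) : ℝ :=
  (matRpow (Aᴴ * A) (2⁻¹ : ℝ)).trace.re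

/-- Tensor product of an `n₁`-qudit operator with an `n₂`-qudit operator,
as an `(n₁+n₂)`-qudit operator. -/
def tensorMat (d n₁ n₂ : ℕ) (ρ₁ : Mat d n₁) (ρ₂ : Mat d n₂) : Mat d (n₁ + n₂) :=
  Matrix.of fun v w =>
    ρ₁ (fun i => v (Fin.castAdd n₂ i)) (fun i => w (Fin.castAdd n₂ i)) *
    ρ₂ (fun j => v (Fin.natAdd n₁ j)) (fun j => w (Fin.natAdd n₁ j))

/-! ### Qubit (`d = 2`) specific definitions -/

/-- The `n`-qubit Weyl (Pauli) operator `w(p,q) = ⊗_i i^{-p_i q_i} Z^{p_i} X^{q_i}`. -/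
noncomputable def weyl2 (n : ℕ) (p q : Fin n → ZMod 2) :
    Matrix (Fin n → ZMod 2) (Fin n → ZMod 2) ℂ :=
  Matrix.of fun k' k =>
    if k' = k + q then
      ∏ i, ((-Complex.I) ^ ((p i).val * (q i).val) *
        (-1 : ℂ) ^ ((p i * (k i + q i)).val))
    else 0

/-- The `n`-qubit characteristic function `Ξ_ρ(p,q) = Tr[ρ w(p,q)†]`. -/
noncomputable def xi2 (n : ℕ) (ρ : Matrix (Fin n → ZMod 2) (Fin n → ZMod 2) ℂ)
    (pq : (Fin n → ZMod 2) × (Fin n → ZMod 2)) : ℂ :=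
  (ρ * (weyl2 n pq.1 pq.2)ᴴ).trace

/-- The logarithmic magic gap
`LMG(ρ) = -log₂ max{|Ξ_ρ(p,q)| : Ξ_ρ(p,q) ≠ 0, |Ξ_ρ(p,q)| ≠ 1}` (`0` if the set is
empty). -/
noncomputable def lmg (n : ℕ) (ρ : Matrix (Fin n → ZMod 2) (Fin n → ZMod 2) ℂ) : ℝ :=
  let s : Finset ℝ :=
    (Finset.univ.filter fun pq : (Fin n → ZMod 2) × (Fin n → ZMod 2) =>
      xi2 n ρ pq ≠ 0 ∧ ‖xi2 n ρ pq‖ ≠ 1).image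
      fun pq => ‖xi2 n ρ pq‖
  if h : s.Nonempty then -Real.logb 2 (s.max' h) else 0

/-- `U` is an `n`-qubit Clifford unitary. -/
noncomputable def IsClifford2 (n : ℕ) (U : Matrix (Fin n → ZMod 2) (Fin n → ZMod 2) ℂ) :
    Prop :=
  U ∈ Matrix.unitaryGroup (Fin n → ZMod 2) ℂ ∧
    ∀ pq : (Fin n → ZMod 2) × (Fin n → ZMod 2),
      ∃ (c : ℂ) (pq' : (Fin n → ZMod 2) × (Fin n → ZMod 2)),
        ‖c‖ = 1 ∧ U * weyl2 n pq.1 pq.2 * Uᴴ = c • weyl2 n pq'.1 pq'.2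

/-- The T gate `diag(1, e^{iπ/4})` acting on qubit `k` of an `n`-qubit system. -/
noncomputable def tGateAt (n : ℕ) (k : Fin n) :
    Matrix (Fin n → ZMod 2) (Fin n → ZMod 2) ℂ :=
  embedAt 2 n k (Matrix.of fun a b =>
    if a = b then (if a = 0 then 1 else Complex.exp (Real.pi * Complex.I / 4)) else 0)

/-- An `n`-qubit state: positive semidefinite with trace one. -/
def IsState2 (n : ℕ) (ρ : Matrix (Fin n → ZMod 2) (Fin n → ZMod 2) ℂ) : Prop :=
  ρ.PosSemidef ∧ ρ.trace = 1

end PaperQI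

namespace PaperQI

section Helpers

variable {d n : ℕ} [Fact (Nat.Prime d)]

lemma ch_eq_std (z : ZMod d) : ch d z = ZMod.stdAddChar z := by
  have h := ZMod.stdAddChar_coe (N := d) (z.val : ℤ)
  have h2 : (((z.val : ℕ) : ℤ) : ZMod d) = z := by simp
  rw [h2] at h
  rw [h, ch]
  simp

lemma ch_add (a b : ZMod d) : ch d (a + b) = ch d a * ch d b := by
  simp only [ch_eq_std, AddChar.map_add_eq_mul]

lemma ch_zero : ch d 0 = 1 := by simp [ch_eq_std]

lemma ch_conj (a : ZMod d) : star (ch d a) = ch d (-a) := by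
  simp only [ch_eq_std, AddChar.map_neg_eq_conj]; rfl

lemma half_add (hd : Odd d) : (2 : ZMod d)⁻¹ + (2 : ZMod d)⁻¹ = 1 := by
  have h2 : (2 : ZMod d) ≠ 0 := by
    intro h
    have : ((2 : ℕ) : ZMod d) = 0 := by exact_mod_cast h
    rw [ZMod.natCast_eq_zero_iff] at this
    have h3 := Nat.le_of_dvd (by norm_num) this
    have := (Fact.out : Nat.Prime d).two_le
    have : d = 2 := by omega
    subst this
    exact absurd hd (by decide)
  field_simp
  norm_num

lemma sum_ch (m : QV d n) : ∑ p : QV d n, ch d (qdot p m) = if m = 0 then (d : ℂ) ^ n else 0 := by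
  let ψ : AddChar (QV d n) ℂ :=
    { toFun := fun p => ch d (qdot p m)
      map_zero_eq_one' := by simp [qdot, ch_zero]
      map_add_eq_mul' := by
        intro a b
        rw [← ch_add]; congr 1
        simp [qdot, add_mul, Finset.sum_add_distrib] }
  have h := AddChar.sum_eq_ite ψ
  have hψ : ψ = 0 ↔ m = 0 := by
    constructor
    · intro h0
      funext i
      have h1 : ψ (Pi.single i 1) = 1 := by rw [h0]; rfl
      have h2 : ψ (Pi.single i 1) = ch d (m i) := by
        change ch d (qdot _ _) = _
        congr 1
        simp [qdot, Pi.single_apply]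
      rw [h2, ch_eq_std, ← (ZMod.stdAddChar (N := d)).map_zero_eq_one,
        ZMod.injective_stdAddChar.eq_iff] at h1
      exact h1
    · rintro rfl
      ext p
      change ch d (qdot _ _) = 1
      simp [qdot, ch_zero]
  change ∑ p, ψ p = _
  rw [h]
  simp only [hψ]
  simp [ZMod.card]

/-- Symmetrised (Wigner-type) coordinates of a matrix. -/
noncomputable def ff (A : Mat d n) (m q : QV d n) : ℂ :=
  A (m + (2 : ZMod d)⁻¹ • q) (m - (2 : ZMod d)⁻¹ • q)

lemma half_smul (hd : Odd d) (q : QV d n) :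
    (2 : ZMod d)⁻¹ • q + (2 : ZMod d)⁻¹ • q = q := by
  rw [← add_smul, half_add hd, one_smul]

lemma qdot_eq (p k : QV d n) : qdot p k = p ⬝ᵥ k := rfl

lemma xi_eq (hd : Odd d) (A : Mat d n) (p q : QV d n) :
    xi d n A (p, q) = ∑ m, ff A m q * ch d (-qdot p m) := by
  rw [xi, Matrix.trace]
  simp only [Matrix.diag_apply, Matrix.mul_apply, weyl, Matrix.of_apply, mul_ite, mul_zero,
    Finset.sum_ite_eq', Finset.sum_ite_eq, Finset.mem_univ, if_true]
  rw [← Equiv.sum_comp (Equiv.addRight ((2 : ZMod d)⁻¹ • q))]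
  refine Finset.sum_congr rfl fun m _ => ?_
  simp only [Equiv.coe_addRight, ff]
  congr 2
  · rw [add_assoc, sub_eq_add_neg]
    congr 1
    nth_rewrite 2 [← half_smul hd q]
    abel
  · simp only [qdot_eq, dotProduct_add, neg_dotProduct, dotProduct_neg, dotProduct_smul, smul_eq_mul]
    ring

lemma sum_ff_sq (hd : Odd d) (A : Mat d n) :
    ∑ q, ∑ m, ‖ff A m q‖ ^ 2 = (Aᴴ * A).trace.re := by
  have h1 : (Aᴴ * A).trace.re = ∑ x : QV d n × QV d n, ‖A x.1 x.2‖ ^ 2 := by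
    rw [Matrix.trace, Fintype.sum_prod_type_right]
    simp only [Matrix.diag_apply, Matrix.mul_apply, Matrix.conjTranspose_apply, Complex.re_sum]
    refine Finset.sum_congr rfl fun b _ => Finset.sum_congr rfl fun a _ => ?_
    rw [Complex.star_def, ← Complex.normSq_eq_conj_mul_self, Complex.ofReal_re, Complex.normSq_eq_norm_sq]
  rw [h1, ← Fintype.sum_prod_type']
  let e : QV d n × QV d n ≃ QV d n × QV d n :=
    { toFun := fun x => (x.2 + (2 : ZMod d)⁻¹ • x.1, x.2 - (2 : ZMod d)⁻¹ • x.1)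
      invFun := fun y => (y.1 - y.2, (2 : ZMod d)⁻¹ • (y.1 + y.2))
      left_inv := by
        rintro ⟨q, m⟩
        ext1
        · change m + _ - (m - _) = q
          rw [add_sub_sub_cancel, half_smul hd]
        · change _ • (m + _ + (m - _)) = m
          rw [add_add_sub_cancel, smul_add, half_smul hd]
      right_inv := by
        rintro ⟨a, b⟩
        ext1
        · change _ • (a + b) + _ • (a - b) = a
          rw [← smul_add, add_add_sub_cancel, smul_add, half_smul hd]
        · change _ • (a + b) - _ • (a - b) = b
          rw [← smul_sub, add_sub_sub_cancel, smul_add, half_smul hd] }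
  exact Equiv.sum_comp e (fun x => ‖A x.1 x.2‖ ^ 2)

lemma parseval_aux (f : QV d n → ℂ) :
    ∑ p, ‖∑ m, f m * ch d (-qdot p m)‖ ^ 2 = (d : ℝ) ^ n * ∑ m, ‖f m‖ ^ 2 := by
  have key : ∀ z : ℂ, ((‖z‖ ^ 2 : ℝ) : ℂ) = z * star z := by
    intro z
    rw [Complex.star_def, Complex.mul_conj, Complex.normSq_eq_norm_sq]
  have : ((∑ p, ‖∑ m, f m * ch d (-qdot p m)‖ ^ 2 : ℝ) : ℂ)
      = (((d : ℝ) ^ n * ∑ m, ‖f m‖ ^ 2 : ℝ) : ℂ) := by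
    rw [Complex.ofReal_sum, Complex.ofReal_mul, Complex.ofReal_sum]
    simp only [key, star_sum, Finset.sum_mul_sum, star_mul', ch_conj, neg_neg]
    rw [Finset.sum_comm]
    rw [Finset.mul_sum]
    refine Finset.sum_congr rfl fun m _ => ?_
    rw [Finset.sum_comm]
    have : ∀ m', ∑ p, f m * ch d (-qdot p m) * (star (f m') * ch d (qdot p m'))
        = f m * star (f m') * (if m' = m then (d : ℂ) ^ n else 0) := by
      intro m'
      have h := sum_ch (m' - m)
      simp only [sub_eq_zero] at h
      rw [← h, Finset.mul_sum]
      refine Finset.sum_congr rfl fun p _ => ?_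
      have : qdot p (m' - m) = -qdot p m + qdot p m' := by
        simp only [qdot_eq, dotProduct_sub]; ring
      rw [this, ch_add]; ring
    simp only [this]
    simp
    ring
  exact_mod_cast this

lemma parseval (hd : Odd d) (A : Mat d n) :
    ∑ v, ‖xi d n A v‖ ^ 2 = (d : ℝ) ^ n * (Aᴴ * A).trace.re := by
  rw [← sum_ff_sq hd, Fintype.sum_prod_type_right, Finset.mul_sum]
  refine Finset.sum_congr rfl fun q _ => ?_
  rw [← parseval_aux]
  simp only [xi_eq hd]

lemma xi_sub (A B : Mat d n) (v : QV d n × QV d n) :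
    xi d n (A - B) v = xi d n A v - xi d n B v := by
  simp [xi, Matrix.sub_mul]

lemma ff_weyl (hd : Odd d) (p q m q' : QV d n) :
    ff (weyl d n p q) m q' = if q' = q then ch d (qdot p m) else 0 := by
  have h : (m + (2 : ZMod d)⁻¹ • q' = m - (2 : ZMod d)⁻¹ • q' + q) ↔ q' = q := by
    constructor
    · intro h
      have h2 := half_smul hd q'
      rw [← h2]
      have := congrArg (fun x => x - m + (2 : ZMod d)⁻¹ • q') h
      calc _ = m + (2 : ZMod d)⁻¹ • q' - m + (2 : ZMod d)⁻¹ • q' := by abel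
        _ = _ := by rw [this]; abel
    · rintro rfl
      nth_rewrite 3 [← half_smul hd q']
      abel
  simp only [ff, weyl, Matrix.of_apply, h]
  split_ifs with hq
  · subst hq
    congr 1
    simp only [qdot_eq, dotProduct_sub, dotProduct_smul, smul_eq_mul]
    ring
  · rfl

lemma xi_weyl (hd : Odd d) (v v' : QV d n × QV d n) :
    xi d n (weyl d n v.1 v.2) v' = if v = v' then (d : ℂ) ^ n else 0 := by
  obtain ⟨p, q⟩ := v
  obtain ⟨p', q'⟩ := v'
  rw [xi_eq hd]
  simp only [ff_weyl hd, Prod.mk.injEq]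
  by_cases hq : q' = q
  · subst hq
    simp only [if_true, and_true]
    have h := sum_ch (p - p')
    simp only [sub_eq_zero] at h
    rw [← h]
    refine Finset.sum_congr rfl fun m _ => ?_
    rw [← ch_add]; congr 1
    simp only [qdot_eq, sub_dotProduct, dotProduct_comm m]
    ring
  · rw [if_neg (fun h => hq h.2.symm)]
    simp [hq]

lemma xi_mean (hd : Odd d) (ρ : Mat d n) (v : QV d n × QV d n) :
    xi d n (meanState d n ρ) v = if ‖xi d n ρ v‖ = 1 then xi d n ρ v else 0 := by
  have hd0 : (d : ℂ) ^ n ≠ 0 := pow_ne_zero _ (by exact_mod_cast (Fact.out : Nat.Prime d).ne_zero)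
  have h1 : xi d n (meanState d n ρ) v = ((d : ℂ) ^ n)⁻¹ * ∑ pq : QV d n × QV d n,
      if ‖xi d n ρ pq‖ = 1 then xi d n ρ pq * xi d n (weyl d n pq.1 pq.2) v else 0 := by
    conv_lhs => rw [xi, meanState]
    rw [Matrix.smul_mul, Matrix.trace_smul, smul_eq_mul, Matrix.sum_mul, Matrix.trace_sum]
    congr 1
    refine Finset.sum_congr rfl fun pq _ => ?_
    split_ifs with h
    · rw [Matrix.smul_mul, Matrix.trace_smul, smul_eq_mul]; rfl
    · simp
  rw [h1, Finset.sum_eq_single v]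
  · split_ifs with h
    · rw [xi_weyl hd, if_pos rfl]; field_simp
    · simp
  · intro b _ hb
    rw [xi_weyl hd, if_neg hb]; simp
  · simp

lemma hs_eq (hd : Odd d) (A : Mat d n) :
    hsNorm A = Real.sqrt (((d : ℝ) ^ n)⁻¹ * ∑ v, ‖xi d n A v‖ ^ 2) := by
  have hd0 : (d : ℝ) ^ n ≠ 0 := pow_ne_zero _ (by exact_mod_cast (Fact.out : Nat.Prime d).ne_zero)
  rw [parseval hd, inv_mul_cancel_left₀ hd0, hsNorm]

lemma eq_of_xi (hd : Odd d) (A B : Mat d n) (h : ∀ v, xi d n A v = xi d n B v) : A = B := by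
  have h1 := parseval hd (A - B)
  simp only [xi_sub, h, sub_self, norm_zero] at h1
  rw [← sum_ff_sq hd] at h1
  have hd0 : (d : ℝ) ^ n ≠ 0 := pow_ne_zero _ (by exact_mod_cast (Fact.out : Nat.Prime d).ne_zero)
  have h2 : ((A - B)ᴴ * (A - B)).trace.re = 0 := by
    rw [← sum_ff_sq hd]
    simpa [hd0] using h1.symm
  have h3 : ((A - B)ᴴ * (A - B)).trace = 0 := by
    have := (Matrix.posSemidef_conjTranspose_mul_self (A - B)).trace_nonneg
    rw [Complex.nonneg_iff] at this
    exact Complex.ext h2 this.2.symm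
  rw [Matrix.trace_conjTranspose_mul_self_eq_zero_iff] at h3
  exact sub_eq_zero.1 h3

/-- The beam-splitter involution on index pairs. -/
def bsEquiv (s t : ZMod d) (hst : s ^ 2 + t ^ 2 = 1) : QV d n × QV d n ≃ QV d n × QV d n where
  toFun x := (s • x.1 + t • x.2, t • x.1 - s • x.2)
  invFun x := (s • x.1 + t • x.2, t • x.1 - s • x.2)
  left_inv := by
    rintro ⟨a, b⟩
    ext i
    · simp; linear_combination (a i) * hst
    · simp; linear_combination (b i) * hst
  right_inv := by
    rintro ⟨a, b⟩
    ext i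
    · simp; linear_combination (a i) * hst
    · simp; linear_combination (b i) * hst

lemma bsU_apply (s t : ZMod d) (hst : s ^ 2 + t ^ 2 = 1) (x y : QV d n × QV d n) :
    bsU d n s t x y = if bsEquiv s t hst x = y then 1 else 0 := by
  have : (x = bsEquiv s t hst y) ↔ (bsEquiv s t hst x = y) := by
    rw [← Equiv.eq_symm_apply]; rfl
  simp only [← this]
  rfl

lemma bsConv_apply (s t : ZMod d) (hst : s ^ 2 + t ^ 2 = 1) (ρ σ : Mat d n) (i i' : QV d n) :
    bsConv d n s t ρ σ i i' = ∑ j, ρ (s • i + t • j) (s • i' + t • j) *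
      σ (t • i - s • j) (t • i' - s • j) := by
  simp only [bsConv, ptrB, Matrix.of_apply, Matrix.mul_apply, Matrix.conjTranspose_apply,
    bsU_apply s t hst]
  refine Finset.sum_congr rfl fun j _ => ?_
  simp [apply_ite star]
  rfl

lemma ff_conv (s t : ZMod d) (hst : s ^ 2 + t ^ 2 = 1) (ρ σ : Mat d n) (m q : QV d n) :
    ff (bsConv d n s t ρ σ) m q =
      ∑ j, ff ρ (s • m + t • j) (s • q) * ff σ (t • m - s • j) (t • q) := by
  rw [ff, bsConv_apply s t hst]
  refine Finset.sum_congr rfl fun j _ => ?_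
  simp only [ff]
  congr 2 <;> · ext i; simp; ring

lemma xi_conv (hd : Odd d) (s t : ZMod d) (hst : s ^ 2 + t ^ 2 = 1) (ρ σ : Mat d n)
    (v : QV d n × QV d n) :
    xi d n (bsConv d n s t ρ σ) v = xi d n ρ (s • v) * xi d n σ (t • v) := by
  obtain ⟨p, q⟩ := v
  rw [Prod.smul_mk, Prod.smul_mk, xi_eq hd, xi_eq hd, xi_eq hd, Finset.sum_mul_sum]
  simp only [ff_conv s t hst, Finset.sum_mul]
  rw [← Fintype.sum_prod_type', ← Fintype.sum_prod_type']
  refine Fintype.sum_equiv (bsEquiv s t hst) _ _ fun x => ?_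
  have h : ch d (-qdot p x.1) = ch d (-qdot (s • p) (s • x.1 + t • x.2)) *
      ch d (-qdot (t • p) (t • x.1 - s • x.2)) := by
    rw [← ch_add]; congr 1
    simp only [qdot_eq, dotProduct_sub, dotProduct_add, dotProduct_smul, smul_dotProduct,
      smul_eq_mul]
    linear_combination (p ⬝ᵥ x.1) * hst
  rw [h]
  change _ = ff ρ (s • x.1 + t • x.2) _ * ch d (-qdot (s • p) (s • x.1 + t • x.2)) *
    (ff σ (t • x.1 - s • x.2) _ * ch d (-qdot (t • p) (t • x.1 - s • x.2)))
  ring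

lemma weyl_mul (hd : Odd d) (p q : QV d n) (c : ZMod d) :
    weyl d n p q * weyl d n (c • p) (c • q) = weyl d n ((c + 1) • p) ((c + 1) • q) := by
  ext a b
  simp only [weyl, Matrix.mul_apply, Matrix.of_apply, mul_ite, mul_zero, Finset.sum_ite_eq',
    Finset.mem_univ, if_true]
  have h : a = b + c • q + q ↔ a = b + (c + 1) • q := by
    rw [add_smul, one_smul, add_assoc]
  simp only [h]
  split_ifs with hh
  · rw [← ch_add]; congr 1
    simp only [qdot_eq, dotProduct_add, dotProduct_smul, smul_dotProduct, smul_eq_mul]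
    linear_combination (p ⬝ᵥ q) * (-c) * half_add hd
  · simp

lemma weyl_zero : weyl d n 0 0 = 1 := by
  ext a b
  simp [weyl, qdot, ch_zero, Matrix.one_apply]

lemma weyl_conjT (hd : Odd d) (p q : QV d n) : (weyl d n p q)ᴴ = weyl d n (-p) (-q) := by
  ext a b
  simp only [weyl, Matrix.conjTranspose_apply, Matrix.of_apply]
  have h : b = a + q ↔ a = b + -q := by
    constructor <;> · rintro rfl; abel
  simp only [h]
  split_ifs with hh
  · rw [ch_conj]; congr 1
    subst hh
    simp only [qdot_eq, dotProduct_add, dotProduct_neg, neg_dotProduct]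
    linear_combination (p ⬝ᵥ q) * (-half_add hd)
  · simp

lemma weyl_unit (hd : Odd d) (p q : QV d n) : weyl d n p q * (weyl d n p q)ᴴ = 1 := by
  have := weyl_mul hd p q (-1)
  rw [weyl_conjT hd]
  simpa [weyl_zero] using this

lemma psd_factor {ρ : Mat d n} (h : ρ.PosSemidef) : ∃ B : Mat d n, ρ = Bᴴ * B := by
  open scoped MatrixOrder in
  exact CStarAlgebra.nonneg_iff_eq_star_mul_self.1 h.nonneg

lemma expand {B W : Mat d n} (hW : W * Wᴴ = 1) (htr : (Bᴴ * B).trace = 1) (c : ℂ) :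
    ((B * (W - c • 1)) * (B * (W - c • 1))ᴴ).trace =
      1 + c * star c - star c * (Bᴴ * B * W).trace - c * star (Bᴴ * B * W).trace := by
  have h1 : ((B * (W - c • 1)) * (B * (W - c • 1))ᴴ).trace
      = (Bᴴ * B * ((W - c • 1) * (W - c • 1)ᴴ)).trace := by
    rw [Matrix.conjTranspose_mul, ← Matrix.mul_assoc, Matrix.trace_mul_comm]
    simp only [Matrix.mul_assoc]
  have h2 : star (Bᴴ * B * W).trace = (Bᴴ * B * Wᴴ).trace := by
    rw [← Matrix.trace_conjTranspose]
    simp only [Matrix.conjTranspose_mul, Matrix.conjTranspose_conjTranspose]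
    rw [Matrix.trace_mul_comm]
  have h3 : (W - c • 1) * (W - c • (1 : Mat d n))ᴴ =
      1 + (c * star c) • 1 - star c • W - c • Wᴴ := by
    simp only [Matrix.conjTranspose_sub, Matrix.conjTranspose_smul, Matrix.conjTranspose_one,
      Matrix.mul_sub, Matrix.sub_mul, hW, Matrix.mul_smul, Matrix.smul_mul, Matrix.mul_one,
      Matrix.one_mul, smul_sub, smul_smul]
    rw [mul_comm (star c) c]
    abel
  rw [h1, h2, h3]
  simp only [Matrix.mul_add, Matrix.mul_sub, Matrix.mul_smul, Matrix.mul_one, Matrix.trace_add,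
    Matrix.trace_sub, Matrix.trace_smul, htr, smul_eq_mul, mul_one]

lemma xi_le (hd : Odd d) {ρ : Mat d n} (hρ : IsState d n ρ) (v : QV d n × QV d n) :
    ‖xi d n ρ v‖ ≤ 1 := by
  obtain ⟨B, rfl⟩ := psd_factor hρ.1
  set c := xi d n (Bᴴ * B) v with hc
  have h := expand (weyl_unit hd (-v.1) (-v.2)) hρ.2 c
  change _ = 1 + c * star c - star c * c - c * star c at h
  have h0 := (Matrix.posSemidef_self_mul_conjTranspose (B * (weyl d n (-v.1) (-v.2) - c • 1))).trace_nonneg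
  rw [h, Complex.nonneg_iff] at h0
  have h1 := h0.1
  have h2 : 1 + c * star c - star c * c - c * star c = ((1 - ‖c‖ ^ 2 : ℝ) : ℂ) := by
    have : c * star c = ((‖c‖ ^ 2 : ℝ) : ℂ) := by
      rw [Complex.star_def, Complex.mul_conj, Complex.normSq_eq_norm_sq]
    rw [mul_comm (star c) c, this]; push_cast; ring
  rw [h2, Complex.ofReal_re] at h1
  nlinarith [norm_nonneg c]

lemma mul_eq_of_xi_one (hd : Odd d) {ρ : Mat d n} (hρ : IsState d n ρ) (v : QV d n × QV d n)
    (h1 : xi d n ρ v = 1) : ρ * weyl d n (-v.1) (-v.2) = ρ := by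
  obtain ⟨B, rfl⟩ := psd_factor hρ.1
  have h := expand (weyl_unit hd (-v.1) (-v.2)) hρ.2 1
  have h1' : (Bᴴ * B * weyl d n (-v.1) (-v.2)).trace = 1 := h1
  rw [h1'] at h
  have h2 : 1 + (1 : ℂ) * star 1 - star 1 * 1 - 1 * star 1 = 0 := by simp
  rw [h2, Matrix.trace_mul_conjTranspose_self_eq_zero_iff, one_smul, Matrix.mul_sub,
    Matrix.mul_one, sub_eq_zero] at h
  rw [Matrix.mul_assoc, h]

lemma xi_smul_one (hd : Odd d) {ρ : Mat d n} (hρ : IsState d n ρ) (v : QV d n × QV d n)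
    (h1 : xi d n ρ v = 1) (c : ZMod d) : xi d n ρ (c • v) = 1 := by
  have key : ∀ k : ℕ, ρ * weyl d n ((k : ZMod d) • (-v.1)) ((k : ZMod d) • (-v.2)) = ρ := by
    intro k
    induction k with
    | zero => simp [weyl_zero]
    | succ k ih =>
      rw [Nat.cast_succ, ← weyl_mul hd, ← Matrix.mul_assoc, mul_eq_of_xi_one hd hρ v h1, ih]
  have h := key c.val
  rw [ZMod.natCast_zmod_val] at h
  rw [xi, Prod.smul_fst, Prod.smul_snd, ← smul_neg, ← smul_neg, h]
  exact hρ.2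

lemma gap_spec (hd : Odd d) {ρ : Mat d n} (hρ : IsState d n ρ) :
    0 ≤ 1 - magicGap d n ρ ∧
    (∀ v, ‖xi d n ρ v‖ ≠ 1 → ‖xi d n ρ v‖ ≤ 1 - magicGap d n ρ) ∧
    ((∃ v, xi d n ρ v ≠ 0 ∧ ‖xi d n ρ v‖ ≠ 1) → 0 < magicGap d n ρ) := by
  simp only [magicGap]
  split_ifs with h
  · simp only [sub_sub_cancel, sub_pos]
    obtain ⟨v0, hv0, hv0e⟩ := Finset.mem_image.1 (Finset.max'_mem _ h)
    have hnn := hv0e ▸ norm_nonneg (xi d n ρ v0)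
    refine ⟨hnn, ?_, ?_⟩
    · intro v hv
      by_cases h0 : xi d n ρ v = 0
      · rw [h0, norm_zero]; exact hnn
      · apply Finset.le_max'
        exact Finset.mem_image.2 ⟨v, Finset.mem_filter.2 ⟨Finset.mem_univ _, h0, hv⟩, rfl⟩
    · intro _
      rw [← hv0e]
      simp only [Finset.mem_filter, Finset.mem_univ, true_and] at hv0
      exact lt_of_le_of_ne (xi_le hd hρ v0) hv0.2
  · have hz : ∀ v, ¬ (xi d n ρ v ≠ 0 ∧ ‖xi d n ρ v‖ ≠ 1) := by
      intro v hv
      exact h ⟨_, Finset.mem_image.2 ⟨v, Finset.mem_filter.2 ⟨Finset.mem_univ _, hv⟩, rfl⟩⟩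
    refine ⟨by norm_num, ?_, ?_⟩
    · intro v _
      simpa using xi_le hd hρ v
    · rintro ⟨v, hv⟩
      exact absurd hv (hz v)

end Helpers

/-- Central limit theorem via the magic gap: if `ρ` is a zero-mean
state (i.e. `Ξ_ρ = 1` wherever `|Ξ_ρ| = 1`), then for every `N`,
`‖⊠^N ρ - M(ρ)‖₂ ≤ (1 - MG(ρ))^N ‖ρ - M(ρ)‖₂`; moreover if `ρ ≠ M(ρ)` then
`MG(ρ) > 0`, so the convergence is exponentially fast. -/
theorem statement19 (d n : ℕ) [Fact (Nat.Prime d)] (hd : Odd d) (hn : 1 ≤ n)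
    (s t : ZMod d) (hs : s ≠ 0) (ht : t ≠ 0) (hst : s ^ 2 + t ^ 2 = 1)
    (ρ : Mat d n) (hρ : IsState d n ρ)
    (hzero : ∀ pq : QV d n × QV d n, ‖xi d n ρ pq‖ = 1 → xi d n ρ pq = 1) :
    (∀ N : ℕ, hsNorm (bsIter d n s t N ρ - meanState d n ρ) ≤
        (1 - magicGap d n ρ) ^ N * hsNorm (ρ - meanState d n ρ)) ∧
    (ρ ≠ meanState d n ρ → 0 < magicGap d n ρ) := by
  have hmean : ∀ v, xi d n (meanState d n ρ) v = if ‖xi d n ρ v‖ = 1 then 1 else 0 := by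
    intro v
    rw [xi_mean hd]
    split_ifs with h
    · exact hzero v h
    · rfl
  have hsm : ∀ (c : ZMod d) v, ‖xi d n ρ v‖ = 1 → ‖xi d n ρ (c • v)‖ = 1 := by
    intro c v h
    rw [xi_smul_one hd hρ v (hzero v h) c, norm_one]
  have hsm' : ∀ (c : ZMod d), c ≠ 0 → ∀ v, ‖xi d n ρ v‖ ≠ 1 → ‖xi d n ρ (c • v)‖ ≠ 1 := by
    intro c hc v h h'
    have := hsm c⁻¹ _ h'
    rw [inv_smul_smul₀ hc] at this
    exact h this
  obtain ⟨hl, hle, hpos⟩ := gap_spec hd hρ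
  have hone : ∀ N v, ‖xi d n ρ v‖ = 1 → xi d n (bsIter d n s t N ρ) v = 1 := by
    intro N
    induction N with
    | zero => exact hzero
    | succ N ih =>
      intro v hv
      rw [bsIter, xi_conv hd s t hst, ih _ (hsm s v hv), hzero _ (hsm t v hv), one_mul]
  refine ⟨?_, ?_⟩
  · intro N
    induction N with
    | zero => simp [bsIter]
    | succ N ih =>
      set l := 1 - magicGap d n ρ with hldef
      have step : hsNorm (bsIter d n s t (N + 1) ρ - meanState d n ρ) ≤
          l * hsNorm (bsIter d n s t N ρ - meanState d n ρ) := by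
        rw [hs_eq hd, hs_eq hd]
        refine le_trans ?_ (le_of_eq (by rw [Real.sqrt_mul (sq_nonneg l), Real.sqrt_sq hl] :
          Real.sqrt (l ^ 2 * (((d : ℝ) ^ n)⁻¹ *
            ∑ v, ‖xi d n (bsIter d n s t N ρ - meanState d n ρ) v‖ ^ 2)) = _))
        apply Real.sqrt_le_sqrt
        rw [mul_left_comm]
        refine mul_le_mul_of_nonneg_left ?_ (by positivity)
        rw [← Equiv.sum_comp (MulAction.toPerm (Units.mk0 s hs) : Equiv.Perm (QV d n × QV d n))
          (fun v => ‖xi d n (bsIter d n s t N ρ - meanState d n ρ) v‖ ^ 2), Finset.mul_sum]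
        refine Finset.sum_le_sum fun v _ => ?_
        have hv : (MulAction.toPerm (Units.mk0 s hs) : Equiv.Perm (QV d n × QV d n)) v = s • v := rfl
        rw [hv, xi_sub, xi_sub, hmean, hmean]
        by_cases h : ‖xi d n ρ v‖ = 1
        · rw [if_pos h, hone _ v h, sub_self, norm_zero, zero_pow two_ne_zero]
          positivity
        · rw [if_neg h, if_neg (hsm' s hs v h), sub_zero, sub_zero, bsIter, xi_conv hd s t hst,
            norm_mul, mul_pow, mul_comm]
          have h2 := hle _ (hsm' t ht v h)
          gcongr
      calc _ ≤ _ := step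
        _ ≤ l * (l ^ N * hsNorm (ρ - meanState d n ρ)) := mul_le_mul_of_nonneg_left ih hl
        _ = _ := by ring
  · intro hne
    apply hpos
    by_contra hcon
    push Not at hcon
    apply hne
    apply eq_of_xi hd
    intro v
    rw [xi_mean hd]
    split_ifs with h
    · rfl
    · by_contra h0
      exact h (hcon v h0)

end PaperQI
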